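/- arXiv:1907.05231 — 3 statements merged into one kernel-verified Lean document; each statement's English description precedes it below -/
import Mathlib

section
/- (Reward preservation in state lumping, trajectory version.) In a finite Markov reward process (S, p, μ, r), suppose two distinct states x_i and x_j are isotopic and let c be the collapse map sending x_j to x_i. For a horizon N ≥ 1, let Traj_N(μ, p) : PMF (Fin N → S) denote the law of the first N states of the chain, defined by sampling X₁ ~ μ and X_{t+1} ~ p(· | X_t) for t = 1, …, N−1 (formally, by iterated PMF.bind). Let μ' = PMF.map c μ and p' be the lumped kernel and initial distribution on the collapsed state space. Then for every N ≥ 1, the pushforward of Traj_N(μ, p) under the coordinatewise collapse map (X₁, …, X_N) ↦ (c(X₁), …, c(X_N)) equals the trajectory law Traj_N(μ', p') of the lumped chain. -/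
/-!
Isotopy gives strong lumpability: the collapsed one-step law depends on a state only through its
collapse. Indeed the pushforwards of `p xi` and `p xj` agree at every point except possibly the
merged one, and a probability distribution is determined by its values off a single point
(`pmf_eq_of_eq_off_point`), so they agree everywhere. Hence `(p x).map c` is the lumped kernel at
`c x` for every `x` (`map_collapse_kernel`). Collapsing coordinatewise commutes with appending the
last state, so the trajectory law follows by induction on the horizon.
-/

noncomputable section

/-- The joint law `Traj_{n+1}(μ, p)` of the first `n+1` states of a Markov chain with
initial distribution `μ` and transition kernel `p`, defined by iterated `PMF.bind`. -/
def traj {S : Type} (p : S → PMF S) (μ : PMF S) : (n : ℕ) → PMF (Fin (n + 1) → S)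
  | 0 => μ.map fun x => fun _ => x
  | n + 1 => (traj p μ n).bind fun f => (p (f (Fin.last n))).map fun y => Fin.snoc f y

/-- The collapse map into the lumped state space `S' = {s : S // s ≠ xj}`:
it sends `xj` to `xi` and fixes every other state. -/
def collapse {S : Type} (xi xj : S) (hne : xi ≠ xj) [DecidableEq S] (x : S) :
    {s : S // s ≠ xj} :=
  if h : x = xj then ⟨xi, hne⟩ else ⟨x, h⟩

/-- The lumped kernel on `S' = {s : S // s ≠ xj}`. -/
def lumpedKernel {S : Type} [DecidableEq S] (p : S → PMF S) (xi xj : S) (hne : xi ≠ xj) :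
    {s : S // s ≠ xj} → PMF {s : S // s ≠ xj} :=
  fun x => PMF.map (collapse xi xj hne) (p x.val)

/-- The value at `a` is one minus the total mass elsewhere. -/
theorem pmf_eq_of_eq_off_point {α : Type} (P Q : PMF α) (a : α)
    (h : ∀ b, b ≠ a → P b = Q b) : P = Q := by
  classical
  ext b
  by_cases hb : b = a
  · subst hb
    have hP := P.tsum_coe
    have hQ := Q.tsum_coe
    rw [ENNReal.tsum_eq_add_tsum_ite b] at hP hQ
    have hrest : (∑' x, if x = b then 0 else P x) = ∑' x, if x = b then 0 else Q x := by
      refine tsum_congr fun x => ?_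
      split_ifs with hx
      · rfl
      · exact h x hx
    rw [hrest] at hP
    refine (ENNReal.add_left_inj ?_).1 (hP.trans hQ.symm)
    exact ne_top_of_le_ne_top ENNReal.one_ne_top (hQ ▸ le_add_self)
  · exact h b hb

/-- Away from the merged state the fibre of the collapse map is a singleton, so the pushforward
leaves the mass unchanged there. -/
theorem map_collapse_apply {S : Type} [DecidableEq S] (P : PMF S) (xi xj : S) (hne : xi ≠ xj)
    (z : {s : S // s ≠ xj}) (hz : z.val ≠ xi) :
    PMF.map (collapse xi xj hne) P z = P z.val := by
  rw [PMF.map_apply, tsum_eq_single z.val]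
  · simp [collapse, z.2]
  · intro b hb
    rw [if_neg]
    rintro rfl
    by_cases h : b = xj
    · exact hz (by simp [collapse, h])
    · exact hb (by simp [collapse, h])

/-- Strong lumpability: the collapsed one-step law from `x` is the lumped kernel at the
collapse of `x`. -/
theorem map_collapse_kernel {S : Type} [DecidableEq S] (p : S → PMF S) (xi xj : S)
    (hne : xi ≠ xj) (hp : ∀ y : S, y ≠ xi → y ≠ xj → p xi y = p xj y) (x : S) :
    PMF.map (collapse xi xj hne) (p x) = lumpedKernel p xi xj hne (collapse xi xj hne x) := by
  by_cases h : x = xj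
  · subst h
    simp only [lumpedKernel, collapse, dif_pos]
    refine pmf_eq_of_eq_off_point _ _ ⟨xi, hne⟩ fun z hz => ?_
    have hz' : z.val ≠ xi := fun e => hz (Subtype.ext e)
    exact (map_collapse_apply _ xi x hne z hz').trans
      ((hp z.val hz' z.2).symm.trans (map_collapse_apply _ xi x hne z hz').symm)
  · simp [lumpedKernel, collapse, h]

/-- reward preservation in state lumping, trajectory version: if the two
distinct states `xi`, `xj` are isotopic, then for every horizon `N = n + 1 ≥ 1`, the
pushforward of the trajectory law of the original chain under the coordinatewise
collapse map equals the trajectory law of the lumped chain. -/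
theorem sat_isotopic_lumping_trajectory_law
    {S : Type} [Fintype S] [Nonempty S] [DecidableEq S]
    (p : S → PMF S) (μ : PMF S) (r : S → ℝ)
    (xi xj : S) (hne : xi ≠ xj)
    (hr : r xi = r xj)
    (hp : ∀ y : S, y ≠ xi → y ≠ xj → p xi y = p xj y) :
    ∀ n : ℕ,
      PMF.map (fun f => fun i : Fin (n + 1) => collapse xi xj hne (f i)) (traj p μ n)
        = traj (lumpedKernel p xi xj hne) (PMF.map (collapse xi xj hne) μ) n := by
  intro n
  induction n with
  | zero =>
    simp only [traj, PMF.map_comp]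
    rfl
  | succ n ih =>
    simp only [traj]
    rw [← ih, PMF.map_bind, PMF.bind_map]
    congr 1
    funext f
    simp only [Function.comp_apply]
    rw [← map_collapse_kernel p xi xj hne hp, PMF.map_comp, PMF.map_comp]
    congr 1
    funext y
    exact Fin.comp_snoc (collapse xi xj hne) f y
end
end

section
/- (Mean-variance risk preservation under isotopic lumping.) In a finite Markov reward process (S, p, μ, r) with two distinct isotopic states x_i, x_j, let (S', p', μ', r') be the lumped Markov reward process obtained by collapsing x_j into x_i. Then for every horizon N ≥ 1, every discount factor γ ∈ (0,1), and every risk parameter k ∈ ℝ, the mean-variance risk of the discounted return is preserved: E[Φ_N] − k·σ(Φ_N) = E[Φ'_N] − k·σ(Φ'_N), where σ denotes standard deviation, Φ_N = Σ_{t=1}^{N} γ^{t−1} r(X_t), and Φ'_N = Σ_{t=1}^{N} γ^{t−1} r'(X'_t). -/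
/-! The two return laws coincide, hence so do all their functionals, in particular the mean-variance
risk. Isotopic states have the same collapsed transition row (`map_collapse_eq`): the rows agree
away from `xi`, `xj`, and the remaining mass is forced because both rows sum to `1`. So the collapsed
chain is Markov with the lumped kernel, i.e. the lumped trajectory law is the image of the original
one (`traj_map_collapse`). Since `r xi = r xj`, the return is a function of the collapsed
trajectory. -/

noncomputable section

/-- The expectation of a real-valued law given as a `PMF`. -/
def pmfMean (q : PMF ℝ) : ℝ := ∑' x : ℝ, (q x).toReal * x

/-- The variance of a real-valued law given as a `PMF`. -/
def pmfVar (q : PMF ℝ) : ℝ := ∑' x : ℝ, (q x).toReal * (x - pmfMean q) ^ 2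

/-- The law of the discounted return `Φ_{n+1} = Σ_{t=1}^{n+1} γ^{t−1} r(X_t)`. -/
def returnLaw {S : Type} (p : S → PMF S) (μ : PMF S) (r : S → ℝ) (γ : ℝ) (n : ℕ) :
    PMF ℝ :=
  PMF.map (fun f => ∑ t : Fin (n + 1), γ ^ (t : ℕ) * r (f t)) (traj p μ n)

/-- Two `PMF`s which agree away from a single point are equal, since both have total mass `1`. -/
lemma pmf_ext_off_point {T : Type} (q q' : PMF T) (a : T) (h : ∀ y, y ≠ a → q y = q' y) :
    q = q' := by
  classical
  have e : ∀ u : PMF T, u a + ∑' y, (if y = a then 0 else u y) = 1 := fun u => by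
    rw [← u.tsum_coe]
    exact (ENNReal.tsum_eq_add_tsum_ite a).symm
  have hs : ∑' y, (if y = a then 0 else q y) = ∑' y, (if y = a then 0 else q' y) := by
    refine tsum_congr fun y => ?_
    split_ifs with hy
    · rfl
    · exact h y hy
  have hfin : ∑' y, (if y = a then 0 else q' y) ≠ ⊤ := fun ht => by
    have := e q'
    simp [ht] at this
  ext y
  by_cases hy : y = a
  · subst hy
    exact (ENNReal.add_left_inj hfin).1 ((hs ▸ e q).trans (e q').symm)
  · exact h y hy

lemma collapse_map_apply {S : Type} [DecidableEq S] (xi xj : S) (hne : xi ≠ xj) (q : PMF S)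
    (y : {s : S // s ≠ xj}) (hy : y.val ≠ xi) : PMF.map (collapse xi xj hne) q y = q y.val := by
  rw [PMF.map_apply, tsum_eq_single y.val]
  · simp [collapse, y.2]
  · intro x hx
    rw [if_neg]
    intro h
    unfold collapse at h
    split_ifs at h
    · exact hy (congrArg Subtype.val h)
    · exact hx (congrArg Subtype.val h).symm

/-- Isotopic states have the same transition row after collapsing. -/
lemma map_collapse_eq {S : Type} [DecidableEq S] (p : S → PMF S) (xi xj : S) (hne : xi ≠ xj)
    (hp : ∀ y : S, y ≠ xi → y ≠ xj → p xi y = p xj y) :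
    PMF.map (collapse xi xj hne) (p xi) = PMF.map (collapse xi xj hne) (p xj) := by
  refine pmf_ext_off_point _ _ ⟨xi, hne⟩ fun y hy => ?_
  have hy' : y.val ≠ xi := fun h => hy (Subtype.ext h)
  rw [collapse_map_apply xi xj hne _ y hy', collapse_map_apply xi xj hne _ y hy',
    hp y.val hy' y.2]

/-- The collapse map intertwines the original kernel with the lumped one. -/
lemma lumpedKernel_collapse {S : Type} [DecidableEq S] (p : S → PMF S) (xi xj : S) (hne : xi ≠ xj)
    (hp : ∀ y : S, y ≠ xi → y ≠ xj → p xi y = p xj y) (x : S) :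
    lumpedKernel p xi xj hne (collapse xi xj hne x) = PMF.map (collapse xi xj hne) (p x) := by
  unfold lumpedKernel
  by_cases h : x = xj
  · subst h
    simpa [collapse] using map_collapse_eq p xi x hne hp
  · simp [collapse, h]

/-- The law of the lumped trajectory is the image of the original law under the pointwise collapse. -/
lemma traj_map_collapse {S : Type} [DecidableEq S] (p : S → PMF S) (μ : PMF S)
    (xi xj : S) (hne : xi ≠ xj) (hp : ∀ y : S, y ≠ xi → y ≠ xj → p xi y = p xj y) (n : ℕ) :
    traj (lumpedKernel p xi xj hne) (PMF.map (collapse xi xj hne) μ) n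
      = PMF.map (fun f t => collapse xi xj hne (f t)) (traj p μ n) := by
  induction n with
  | zero =>
    simp only [traj, PMF.map_comp]
    rfl
  | succ n ih =>
    simp only [traj, ih, PMF.bind_map, PMF.map_bind]
    congr 1
    funext f
    simp only [Function.comp_apply, lumpedKernel_collapse p xi xj hne hp, PMF.map_comp]
    congr 1
    funext y
    exact (Fin.comp_snoc (collapse xi xj hne) f y).symm

lemma returnLaw_lumped {S : Type} [DecidableEq S] (p : S → PMF S) (μ : PMF S) (r : S → ℝ)
    (xi xj : S) (hne : xi ≠ xj) (hr : r xi = r xj)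
    (hp : ∀ y : S, y ≠ xi → y ≠ xj → p xi y = p xj y) (γ : ℝ) (n : ℕ) :
    returnLaw (lumpedKernel p xi xj hne) (PMF.map (collapse xi xj hne) μ) (fun x => r x.val) γ n
      = returnLaw p μ r γ n := by
  have hc : ∀ x, r (collapse xi xj hne x).val = r x := fun x => by
    by_cases h : x = xj
    · simp [collapse, h, hr]
    · simp [collapse, h]
  unfold returnLaw
  rw [traj_map_collapse p μ xi xj hne hp, PMF.map_comp]
  congr 1
  funext f
  simp [hc]

/-- mean-variance risk preservation under isotopic lumping: if the two
distinct states `xi`, `xj` are isotopic, then for every horizon `N = n + 1 ≥ 1`, every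
discount factor `γ ∈ (0,1)` and every risk parameter `k`, the mean-variance risk
`E[Φ_N] − k·σ(Φ_N)` of the discounted return is the same for the original chain and
for the lumped chain. -/
theorem sat_isotopic_lumping_mean_variance_risk
    {S : Type} [Fintype S] [Nonempty S] [DecidableEq S]
    (p : S → PMF S) (μ : PMF S) (r : S → ℝ)
    (xi xj : S) (hne : xi ≠ xj)
    (hr : r xi = r xj)
    (hp : ∀ y : S, y ≠ xi → y ≠ xj → p xi y = p xj y)
    (γ : ℝ) (hγ0 : 0 < γ) (hγ1 : γ < 1) (k : ℝ) :
    ∀ n : ℕ,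
      pmfMean (returnLaw p μ r γ n) - k * Real.sqrt (pmfVar (returnLaw p μ r γ n))
        = pmfMean (returnLaw (lumpedKernel p xi xj hne) (PMF.map (collapse xi xj hne) μ)
              (fun x => r x.val) γ n)
          - k * Real.sqrt (pmfVar (returnLaw (lumpedKernel p xi xj hne)
              (PMF.map (collapse xi xj hne) μ) (fun x => r x.val) γ n)) := by
  intro n
  rw [returnLaw_lumped p μ r xi xj hne hr hp γ n]
end
end

section
/- (Return-distribution correspondence under the state-augmentation transformation.) In the setting of the finite-horizon state-augmentation transformation — original MDP (S, A, J, p, d, μ) with stationary randomized policy π, and transformed Markov chain (S†, p†_π, μ†, r†) — fix a horizon N ≥ 1 and a discount factor γ ∈ (0,1). Let Φ_N = Σ_{t=1}^{N} γ^{t−1} R_t denote the discounted return of the original process and Φ†_{N+1} = Σ_{t=1}^{N+1} γ^{t−1} r†(X†_t) the discounted return of the transformed chain over N+1 epochs. Then the law of Φ†_{N+1} equals the pushforward of the law of Φ_N under multiplication by γ; in particular, E[Φ†_{N+1}] = γ · E[Φ_N] and Var(Φ†_{N+1}) = γ² · Var(Φ_N). -/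
/-!
The chain started from `inr x` first collects the reward `0`, and the rest of its trajectory
starts from the law `pAug p d π (inr x)`. Peeling off the *first* state of a trajectory
(`traj_succ`, whereas `traj` itself is defined by appending the last one) matches the
recursion of `rewardSeqLaw`, so by induction the rewards read along the transformed chain
after any state `s` have the law of the original reward sequence started at `curOrig s`
(`map_rAug_traj`). The return of the transformed chain is then `0 + γ • (original return)`,
which gives the identity of laws. The mean and the variance follow by the change of variables
`x ↦ γ * x`, a bijection of `ℝ` since `γ ≠ 0`; this reindexes the defining sums over all of
`ℝ`, so no summability is needed.
-/

noncomputable section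

/-- The law of the reward sequence `(R₁, …, R_n)` of the MDP with transition kernel
`p`, reward distribution `d` and stationary randomized policy `π`, started at `x`. -/
def rewardSeqLaw {S A : Type} {J : Finset ℝ}
    (p : S → A → PMF S) (d : S → A → S → PMF J) (π : S → PMF A) :
    (n : ℕ) → S → PMF (Fin n → ℝ)
  | 0, _ => PMF.pure (fun i => i.elim0)
  | n + 1, x =>
      (π x).bind fun a => (p x a).bind fun y => (d x a y).bind fun j =>
        (rewardSeqLaw p d π n y).map fun f => Fin.cons (j : ℝ) f

/-- The augmented state space of the state-augmentation transformation. -/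
abbrev SAug (S A : Type) (J : Finset ℝ) : Type := (S × A × S × (J : Finset ℝ)) ⊕ S

/-- The current-original-state component of an augmented state. -/
def curOrig {S A : Type} {J : Finset ℝ} : SAug S A J → S
  | Sum.inl (_, _, y, _) => y
  | Sum.inr x => x

/-- The transformed transition kernel `p†_π`. -/
def pAug {S A : Type} {J : Finset ℝ}
    (p : S → A → PMF S) (d : S → A → S → PMF J) (π : S → PMF A) :
    SAug S A J → PMF (SAug S A J) :=
  fun s =>
    (π (curOrig s)).bind fun a => (p (curOrig s) a).bind fun y =>
      (d (curOrig s) a y).map fun j => Sum.inl (curOrig s, a, y, j)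

/-- The deterministic state-based reward of the transformed chain. -/
def rAug {S A : Type} {J : Finset ℝ} : SAug S A J → ℝ
  | Sum.inl (_, _, _, i) => (i : ℝ)
  | Sum.inr _ => 0

/-- First-step decomposition of the trajectory law. -/
lemma traj_succ {S : Type} (p : S → PMF S) (μ : PMF S) (n : ℕ) :
    traj p μ (n + 1) =
      μ.bind fun x => (traj p (p x) n).map fun f => (Fin.cons x f : Fin (n + 2) → S) := by
  induction n with
  | zero =>
    simp only [traj, PMF.bind_map, PMF.map_comp]
    congr 1
    funext x
    simp only [Function.comp_apply]
    congr 1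
    funext y i
    fin_cases i <;> rfl
  | succ n ih =>
    rw [traj, ih, PMF.bind_bind]
    congr 1
    funext x
    rw [PMF.bind_map, traj, PMF.map_bind]
    congr 1
    funext f
    simp only [Function.comp_apply, PMF.map_comp]
    have h : (Fin.cons x f : Fin (n + 2) → S) (Fin.last (n + 1)) = f (Fin.last n) := rfl
    rw [h]
    congr 1
    funext y
    exact (Fin.cons_snoc_eq_snoc_cons x f y).symm

/-- One step of the transformed chain from `s` draws action, next state and reward as the
original process does from `curOrig s`. -/
lemma pAug_bind {S A T : Type} {J : Finset ℝ}
    (p : S → A → PMF S) (d : S → A → S → PMF J) (π : S → PMF A) (s : SAug S A J)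
    (F : SAug S A J → PMF T) :
    (pAug p d π s).bind F =
      (π (curOrig s)).bind fun a => (p (curOrig s) a).bind fun y =>
        (d (curOrig s) a y).bind fun j => F (Sum.inl (curOrig s, a, y, j)) := by
  simp only [pAug, PMF.bind_bind, PMF.bind_map]
  rfl

/-- The rewards read along the transformed chain after leaving `s` have the law of the
original reward sequence started at `curOrig s`. -/
lemma map_rAug_traj {S A : Type} {J : Finset ℝ}
    (p : S → A → PMF S) (d : S → A → S → PMF J) (π : S → PMF A) (n : ℕ) (s : SAug S A J) :
    (traj (pAug p d π) (pAug p d π s) n).map (fun g t => rAug (g t)) =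
      rewardSeqLaw p d π (n + 1) (curOrig s) := by
  induction n generalizing s with
  | zero =>
    rw [traj, PMF.map_comp, ← PMF.bind_pure_comp, pAug_bind]
    simp only [rewardSeqLaw, PMF.pure_map, Function.comp_apply]
    congr! 7
    funext t
    fin_cases t
    rfl
  | succ n ih =>
    rw [traj_succ, PMF.map_bind, pAug_bind, rewardSeqLaw]
    congr! 6 with a y j
    change _ = PMF.map _ (rewardSeqLaw p d π (n + 1) (curOrig (Sum.inl (curOrig s, a, y, j))))
    rw [← ih, PMF.map_comp, PMF.map_comp]
    congr 1
    funext g i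
    refine Fin.cases ?_ (fun i => ?_) i <;> rfl

/-- Scaling by a nonzero constant is injective, so it transports point masses. -/
lemma map_mul_apply {γ : ℝ} (hγ : γ ≠ 0) (q : PMF ℝ) (x : ℝ) :
    (q.map fun x => γ * x) (γ * x) = q x := by
  rw [PMF.map_apply, tsum_eq_single x]
  · simp
  · intro y hy
    rw [if_neg]
    intro h
    exact hy (mul_left_cancel₀ hγ h).symm

lemma pmfMean_map_mul {γ : ℝ} (hγ : γ ≠ 0) (q : PMF ℝ) :
    pmfMean (q.map fun x => γ * x) = γ * pmfMean q := by
  rw [pmfMean, pmfMean, ← (Equiv.mulLeft₀ γ hγ).tsum_eq, ← tsum_mul_left]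
  congr 1
  funext x
  rw [show Equiv.mulLeft₀ γ hγ x = γ * x from rfl, map_mul_apply hγ]
  ring

lemma pmfVar_map_mul {γ : ℝ} (hγ : γ ≠ 0) (q : PMF ℝ) :
    pmfVar (q.map fun x => γ * x) = γ ^ 2 * pmfVar q := by
  rw [pmfVar, pmfVar, pmfMean_map_mul hγ, ← (Equiv.mulLeft₀ γ hγ).tsum_eq, ← tsum_mul_left]
  congr 1
  funext x
  rw [show Equiv.mulLeft₀ γ hγ x = γ * x from rfl, map_mul_apply hγ]
  ring


/-- return-distribution correspondence under the state-augmentation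
transformation: for horizon `N = n + 1 ≥ 1` and discount factor `γ ∈ (0,1)`, the law
of the discounted return `Φ†_{N+1}` of the transformed chain over `N + 1` epochs equals
the pushforward of the law of the discounted return `Φ_N` of the original process under
multiplication by `γ`; in particular `E[Φ†_{N+1}] = γ·E[Φ_N]` and
`Var(Φ†_{N+1}) = γ²·Var(Φ_N)`. -/
theorem sat_return_distribution_correspondence
    {S A : Type} [Fintype S] [Nonempty S] [Fintype A] [Nonempty A]
    (J : Finset ℝ) (hJ : J.Nonempty)
    (p : S → A → PMF S) (d : S → A → S → PMF J)
    (μ : PMF S) (π : S → PMF A)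
    (γ : ℝ) (hγ0 : 0 < γ) (hγ1 : γ < 1) :
    ∀ n : ℕ,
      PMF.map (fun g => ∑ t : Fin (n + 2), γ ^ (t : ℕ) * rAug (g t))
            (traj (pAug p d π) (PMF.map Sum.inr μ) (n + 1))
          = PMF.map (fun x => γ * x)
              (PMF.map (fun f => ∑ t : Fin (n + 1), γ ^ (t : ℕ) * f t)
                (μ.bind (fun x => rewardSeqLaw p d π (n + 1) x)))
      ∧ pmfMean (PMF.map (fun g => ∑ t : Fin (n + 2), γ ^ (t : ℕ) * rAug (g t))
            (traj (pAug p d π) (PMF.map Sum.inr μ) (n + 1)))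
          = γ * pmfMean (PMF.map (fun f => ∑ t : Fin (n + 1), γ ^ (t : ℕ) * f t)
              (μ.bind (fun x => rewardSeqLaw p d π (n + 1) x)))
      ∧ pmfVar (PMF.map (fun g => ∑ t : Fin (n + 2), γ ^ (t : ℕ) * rAug (g t))
            (traj (pAug p d π) (PMF.map Sum.inr μ) (n + 1)))
          = γ ^ 2 * pmfVar (PMF.map (fun f => ∑ t : Fin (n + 1), γ ^ (t : ℕ) * f t)
              (μ.bind (fun x => rewardSeqLaw p d π (n + 1) x))) := by
  intro n
  have key : PMF.map (fun g => ∑ t : Fin (n + 2), γ ^ (t : ℕ) * rAug (g t))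
        (traj (pAug p d π) (PMF.map Sum.inr μ) (n + 1))
      = PMF.map (fun x => γ * x)
          (PMF.map (fun f => ∑ t : Fin (n + 1), γ ^ (t : ℕ) * f t)
            (μ.bind (fun x => rewardSeqLaw p d π (n + 1) x))) := by
    rw [traj_succ, PMF.bind_map, PMF.map_bind, PMF.map_comp, PMF.map_bind]
    congr 1
    funext x
    change PMF.map _ (PMF.map _ (traj (pAug p d π) (pAug p d π (Sum.inr x)) n)) =
      PMF.map _ (rewardSeqLaw p d π (n + 1) (curOrig (Sum.inr x : SAug S A J)))
    rw [← map_rAug_traj, PMF.map_comp, PMF.map_comp]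
    congr 1
    funext g
    simp only [Function.comp_apply]
    rw [Fin.sum_univ_succ, Finset.mul_sum]
    simp only [Fin.cons_zero, Fin.cons_succ, Fin.val_succ, rAug, mul_zero, zero_add, pow_succ']
    simp only [mul_assoc]
  rw [key]
  exact ⟨rfl, pmfMean_map_mul hγ0.ne' _, pmfVar_map_mul hγ0.ne' _⟩
end
end
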